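/- Let p > 1 and a, b, L > 0, and let μ, ν > 0. Then (μ, ν) belongs to the Fučík spectrum Σ^{a,b}_p(0,L) if and only if there exist nonnegative integers P and N with P + N ≥ 1 and |P − N| ≤ 1 such that P · μ^{−1/p} + N · ν^{−1/p} = ( λ^{a,b}_{1,p}(0,L) )^{−1/p}. -/

import Mathlib

open Set

/-- `u` is C¹ on `[α, γ]` with derivative `u'` there. -/
def C1On (α γ : ℝ) (u u' : ℝ → ℝ) : Prop :=
  (∀ t ∈ Set.Icc α γ, HasDerivWithinAt u (u' t) (Set.Icc α γ) t) ∧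
  ContinuousOn u' (Set.Icc α γ)

/-- Admissible functions on `[0, L]`: C¹ with zero boundary values. -/
def Adm (L : ℝ) (u u' : ℝ → ℝ) : Prop :=
  C1On 0 L u u' ∧ u 0 = 0 ∧ u L = 0

/-- The asymmetric energy integrand `a^p (s⁺)^p + b^p (s⁻)^p`. -/
noncomputable def asymE (p a b s : ℝ) : ℝ :=
  a ^ p * (max s 0) ^ p + b ^ p * (max (-s) 0) ^ p

/-- The asymmetric flux `a^p (s⁺)^(p-1) - b^p (s⁻)^(p-1)`. -/
noncomputable def asymFlux (p a b s : ℝ) : ℝ :=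
  a ^ p * (max s 0) ^ (p - 1) - b ^ p * (max (-s) 0) ^ (p - 1)

/-- The first Dirichlet eigenvalue `λ^{a,b}_{1,p}(0,L)`, as the infimum of the
asymmetric energy over normalized admissible functions. -/
noncomputable def lam1 (p a b L : ℝ) : ℝ :=
  sInf { E : ℝ | ∃ u u' : ℝ → ℝ, Adm L u u' ∧
    (∫ t in (0:ℝ)..L, |u t| ^ p) = 1 ∧
    E = ∫ t in (0:ℝ)..L, asymE p a b (u' t) }

/-- `u` (a C¹ function on `[0,L]` with derivative `u'` and zero boundary values)
is a weak solution of `-Δ^{a,b}_p u = g` on `(0,L)`. -/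
def IsWeakSol (p a b L : ℝ) (u u' g : ℝ → ℝ) : Prop :=
  Adm L u u' ∧
  ∀ φ φ' : ℝ → ℝ, Adm L φ φ' →
    (∫ t in (0:ℝ)..L, asymFlux p a b (u' t) * φ' t) =
      ∫ t in (0:ℝ)..L, g t * φ t

/-!
A function is a weak solution exactly when, together with its flux, it solves a first-order
Hamiltonian system. Conservation of energy makes the zeros of nontrivial solutions simple, so that
such a solution consists of alternating positive and negative humps. On a positive hump the quotient
of the flux by `u ^ (p - 1)` solves a Riccati equation; Picone's inequality then shows that the
hump, rescaled to `[0, L]`, minimizes the Rayleigh quotient, whence its length is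
`L * (lam1 p a b L / μ) ^ (1 / p)`. The reflection `u ↦ -u` swaps `(a, μ)` with `(b, ν)` and leaves
`lam1` unchanged, so negative humps have length `L * (lam1 p a b L / ν) ^ (1 / p)`, and the humps
fill `[0, L]` exactly when their lengths add up to `L`. Solutions with infinitely many humps exist
because the generalized Prüfer equation for the angle is autonomous and separable.
-/

section AsymmetricPowers

/-- The odd asymmetric power `A (s⁺)^r - B (s⁻)^r`. The flux, its inverse and the right-hand side
of the equation are all of this form. -/
noncomputable def asymPow (r A B s : ℝ) : ℝ := A * (max s 0) ^ r - B * (max (-s) 0) ^ r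

/-- The even asymmetric power `A (s⁺)^r + B (s⁻)^r`: up to the factor `r`, the primitive of
`asymPow (r - 1) A B`. -/
noncomputable def asymAbsPow (r A B s : ℝ) : ℝ := A * (max s 0) ^ r + B * (max (-s) 0) ^ r

variable {r A B c s : ℝ}

lemma asymPow_neg (r A B s : ℝ) : asymPow r A B (-s) = -asymPow r B A s := by
  simp only [asymPow, neg_neg, neg_sub]

lemma asymAbsPow_neg (r A B s : ℝ) : asymAbsPow r A B (-s) = asymAbsPow r B A s := by
  simp only [asymAbsPow, neg_neg, add_comm]

lemma asymPow_of_nonneg (hr : r ≠ 0) (hs : 0 ≤ s) : asymPow r A B s = A * s ^ r := by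
  simp [asymPow, hs, Real.zero_rpow hr]

lemma asymAbsPow_of_nonneg (hr : r ≠ 0) (hs : 0 ≤ s) : asymAbsPow r A B s = A * s ^ r := by
  simp [asymAbsPow, hs, Real.zero_rpow hr]

lemma asymAbsPow_zero (hr : r ≠ 0) : asymAbsPow r A B 0 = 0 := by
  rw [asymAbsPow_of_nonneg hr le_rfl, Real.zero_rpow hr, mul_zero]

lemma asymPow_mul_left (d : ℝ) : asymPow r (d * A) (d * B) s = d * asymPow r A B s := by
  simp only [asymPow]; ring

lemma asymPow_mul (hc : 0 ≤ c) (s : ℝ) : asymPow r A B (c * s) = c ^ r * asymPow r A B s := by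
  have hpos (x : ℝ) : max (c * x) 0 = c * max x 0 := by rw [mul_max_of_nonneg _ _ hc, mul_zero]
  rw [asymPow, ← mul_neg, hpos, hpos, Real.mul_rpow hc (le_max_right _ _),
    Real.mul_rpow hc (le_max_right _ _), asymPow]
  ring

lemma asymAbsPow_mul (hc : 0 ≤ c) (s : ℝ) :
    asymAbsPow r A B (c * s) = c ^ r * asymAbsPow r A B s := by
  have hpos (x : ℝ) : max (c * x) 0 = c * max x 0 := by rw [mul_max_of_nonneg _ _ hc, mul_zero]
  rw [asymAbsPow, ← mul_neg, hpos, hpos, Real.mul_rpow hc (le_max_right _ _),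
    Real.mul_rpow hc (le_max_right _ _), asymAbsPow]
  ring

lemma asymPow_sub_one_mul_self (hr : 1 < r) (A B s : ℝ) :
    asymPow (r - 1) A B s * s = asymAbsPow r A B s := by
  wlog hs : 0 ≤ s generalizing A B s
  · have := this B A (-s) (by linarith)
    rwa [asymPow_neg, neg_mul_neg, asymAbsPow_neg] at this
  rw [asymPow_of_nonneg (by linarith) hs, asymAbsPow_of_nonneg (by linarith) hs, mul_assoc,
    ← Real.rpow_add_one' hs (by linarith), sub_add_cancel]

lemma asymPow_pos (hr : r ≠ 0) (hA : 0 < A) (hs : 0 < s) : 0 < asymPow r A B s := by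
  rw [asymPow_of_nonneg hr hs.le]
  positivity

lemma asymAbsPow_nonneg (hA : 0 ≤ A) (hB : 0 ≤ B) (r s : ℝ) : 0 ≤ asymAbsPow r A B s := by
  unfold asymAbsPow
  positivity

lemma asymAbsPow_pos (hr : r ≠ 0) (hA : 0 < A) (hB : 0 < B) (hs : s ≠ 0) :
    0 < asymAbsPow r A B s := by
  wlog hs' : 0 < s generalizing A B s
  · have := this hB hA (neg_ne_zero.2 hs) (by grind)
    rwa [asymAbsPow_neg] at this
  rw [asymAbsPow_of_nonneg hr hs'.le]
  positivity

lemma leftInverse_asymPow (h : r * c = 1) (hA : 0 < A) (hB : 0 < B) :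
    Function.LeftInverse (asymPow c (A ^ (-c)) (B ^ (-c))) (asymPow r A B) := by
  intro s
  have hr : r ≠ 0 := left_ne_zero_of_mul_eq_one h
  have hc : c ≠ 0 := right_ne_zero_of_mul_eq_one h
  wlog hs : 0 ≤ s generalizing A B s
  · have := this hB hA (-s) (by linarith)
    rwa [asymPow_neg, asymPow_neg, neg_inj] at this
  rw [asymPow_of_nonneg hr hs, asymPow_of_nonneg hc (by positivity),
    Real.mul_rpow hA.le (by positivity), ← Real.rpow_mul hs, h, Real.rpow_one, ← mul_assoc,
    ← Real.rpow_add hA, neg_add_cancel, Real.rpow_zero, one_mul]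

lemma continuous_asymPow (hr : 0 ≤ r) : Continuous (asymPow r A B) := by
  have hmax (f : ℝ → ℝ) (hf : Continuous f) : Continuous fun s => (max (f s) 0) ^ r :=
    (hf.max continuous_const).rpow_const fun _ => Or.inr hr
  exact (continuous_const.mul (hmax _ continuous_id)).sub
    (continuous_const.mul (hmax _ continuous_neg))

lemma hasDerivAt_max_zero_rpow (hr : 1 < r) (s : ℝ) :
    HasDerivAt (fun x : ℝ => (max x 0) ^ r) (r * (max s 0) ^ (r - 1)) s := by
  rcases lt_trichotomy s 0 with hs | rfl | hs
  · rw [max_eq_right hs.le, Real.zero_rpow (by linarith), mul_zero]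
    refine (hasDerivAt_const s (0 : ℝ)).congr_of_eventuallyEq ?_
    filter_upwards [Iio_mem_nhds hs] with y hy
    rw [max_eq_right (le_of_lt hy), Real.zero_rpow (by linarith)]
  · have hright := Real.hasDerivAt_rpow_const (x := 0) (Or.inr hr.le)
    rw [← hasDerivWithinAt_univ, ← Iic_union_Ici (a := (0 : ℝ)), max_self]
    refine .union ?_ (hright.hasDerivWithinAt.congr_of_mem (fun y hy => ?_) self_mem_Ici)
    · rw [Real.zero_rpow (by linarith), mul_zero]
      refine (hasDerivWithinAt_const _ _ (0 : ℝ)).congr_of_mem (fun y hy => ?_) self_mem_Iic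
      rw [max_eq_right hy, Real.zero_rpow (by linarith)]
    · rw [max_eq_left hy]
  · rw [max_eq_left hs.le]
    refine (Real.hasDerivAt_rpow_const (Or.inl hs.ne')).congr_of_eventuallyEq ?_
    filter_upwards [Ioi_mem_nhds hs] with y hy
    rw [max_eq_left (le_of_lt hy)]

lemma hasDerivAt_asymAbsPow (hr : 1 < r) (A B s : ℝ) :
    HasDerivAt (asymAbsPow r A B) (r * asymPow (r - 1) A B s) s := by
  have hneg := (hasDerivAt_max_zero_rpow hr (-s)).comp s (hasDerivAt_neg s)
  refine (((hasDerivAt_max_zero_rpow hr s).const_mul A).add (hneg.const_mul B)).congr_deriv ?_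
  rw [asymPow]
  ring

lemma continuous_asymAbsPow (hr : 1 < r) : Continuous (asymAbsPow r A B) :=
  continuous_iff_continuousAt.2 fun s => (hasDerivAt_asymAbsPow hr A B s).continuousAt

variable {p q a b : ℝ}

lemma sub_one_mul_sub_one_eq_one (h : p.HolderConjugate q) : (p - 1) * (q - 1) = 1 := by
  linear_combination h.sub_one_mul_conj

lemma mul_le_young (h : p.HolderConjugate q) (ha : 0 < a) {x y : ℝ} (hx : 0 ≤ x) (hy : 0 ≤ y) :
    p * (x * y) ≤ (p - 1) * (a ^ (-q) * x ^ q) + a ^ p * y ^ p := by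
  have young := Real.young_inequality_of_nonneg (by positivity : 0 ≤ a * y)
    (by positivity : 0 ≤ a⁻¹ * x) h
  calc p * (x * y) = p * (a * y * (a⁻¹ * x)) := by field_simp
    _ ≤ p * ((a * y) ^ p / p + (a⁻¹ * x) ^ q / q) := mul_le_mul_of_nonneg_left young h.nonneg
    _ = p / q * (a⁻¹ * x) ^ q + (a * y) ^ p := by
      rw [mul_add, mul_div_cancel₀ _ h.ne_zero]; ring
    _ = (p - 1) * (a ^ (-q) * x ^ q) + a ^ p * y ^ p := by
      rw [h.div_conj_eq_sub_one, Real.mul_rpow ha.le hy, Real.mul_rpow (by positivity) hx,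
        Real.inv_rpow ha.le, Real.rpow_neg ha.le]

lemma mul_le_asymE (h : p.HolderConjugate q) (ha : 0 < a) (hb : 0 < b) (w s : ℝ) :
    p * (w * s) ≤ (p - 1) * asymAbsPow q (a ^ (-q)) (b ^ (-q)) w + asymE p a b s := by
  change _ ≤ _ + asymAbsPow p (a ^ p) (b ^ p) s
  rcases le_or_gt (w * s) 0 with hws | hws
  · have hE : 0 ≤ asymAbsPow p (a ^ p) (b ^ p) s :=
      asymAbsPow_nonneg (by positivity) (by positivity) _ _
    have hF : 0 ≤ asymAbsPow q (a ^ (-q)) (b ^ (-q)) w :=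
      asymAbsPow_nonneg (by positivity) (by positivity) _ _
    exact (mul_nonpos_of_nonneg_of_nonpos h.nonneg hws).trans
      (add_nonneg (mul_nonneg h.sub_one_pos.le hF) hE)
  wlog hw : 0 < w generalizing a b w s
  · have := this hb ha (-w) (-s) (by rwa [neg_mul_neg]) (by grind)
    rwa [neg_mul_neg, asymAbsPow_neg, asymAbsPow_neg] at this
  have hs : 0 < s := pos_of_mul_pos_right hws hw.le
  rw [asymAbsPow_of_nonneg h.symm.ne_zero hw.le, asymAbsPow_of_nonneg h.ne_zero hs.le]
  exact mul_le_young h ha hw.le hs.le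

lemma leftInverse_asymFlux (h : p.HolderConjugate q) (ha : 0 < a) (hb : 0 < b) :
    Function.LeftInverse (asymPow (q - 1) (a ^ (-q)) (b ^ (-q))) (asymFlux p a b) := by
  have hrpow {c : ℝ} (hc : 0 < c) : (c ^ p) ^ (-(q - 1)) = c ^ (-q) := by
    rw [← Real.rpow_mul hc.le, mul_neg, mul_comm, h.symm.sub_one_mul_conj]
  rw [← hrpow ha, ← hrpow hb]
  exact leftInverse_asymPow (sub_one_mul_sub_one_eq_one h) (by positivity) (by positivity)

lemma rightInverse_asymFlux (h : p.HolderConjugate q) (ha : 0 < a) (hb : 0 < b) :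
    Function.RightInverse (asymPow (q - 1) (a ^ (-q)) (b ^ (-q))) (asymFlux p a b) := by
  have hrpow {c : ℝ} (hc : 0 < c) : (c ^ (-q)) ^ (-(p - 1)) = c ^ p := by
    rw [← Real.rpow_mul hc.le, neg_mul_neg, mul_comm, h.sub_one_mul_conj]
  have hinv := leftInverse_asymPow (sub_one_mul_sub_one_eq_one h.symm)
    (Real.rpow_pos_of_pos ha (-q)) (Real.rpow_pos_of_pos hb (-q))
  rwa [hrpow ha, hrpow hb] at hinv

lemma asymFlux_mul_self (hp : 1 < p) (a b s : ℝ) : asymFlux p a b s * s = asymE p a b s :=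
  asymPow_sub_one_mul_self hp (a ^ p) (b ^ p) s

lemma continuous_asymFlux (hp : 1 ≤ p) : Continuous (asymFlux p a b) :=
  continuous_asymPow (sub_nonneg.2 hp)

end AsymmetricPowers

section HamiltonianSystem

/-- On `s`, the pair `(u, z)` solves the first-order system `u' = A (z⁺)^(q-1) - B (z⁻)^(q-1)`,
`z' = -(μ (u⁺)^(p-1) - ν (u⁻)^(p-1))`. For `A = a^(-q)` and `B = b^(-q)` it is the system satisfied
by a solution `u` of the equation and its flux `z = a^p (u'⁺)^(p-1) - b^p (u'⁻)^(p-1)`. -/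
structure HamiltonSys (p q A B μ ν : ℝ) (s : Set ℝ) (u z : ℝ → ℝ) : Prop where
  hasDerivWithinAt_fst : ∀ t ∈ s, HasDerivWithinAt u (asymPow (q - 1) A B (z t)) s t
  hasDerivWithinAt_snd : ∀ t ∈ s, HasDerivWithinAt z (-asymPow (p - 1) μ ν (u t)) s t

namespace HamiltonSys

variable {p q A B μ ν : ℝ} {s : Set ℝ} {u z : ℝ → ℝ}

lemma continuousOn_fst (hs : HamiltonSys p q A B μ ν s u z) : ContinuousOn u s :=
  fun t ht => (hs.hasDerivWithinAt_fst t ht).continuousWithinAt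

lemma continuousOn_snd (hs : HamiltonSys p q A B μ ν s u z) : ContinuousOn z s :=
  fun t ht => (hs.hasDerivWithinAt_snd t ht).continuousWithinAt

lemma mono (hs : HamiltonSys p q A B μ ν s u z) {s' : Set ℝ} (hsub : s' ⊆ s) :
    HamiltonSys p q A B μ ν s' u z :=
  ⟨fun t ht => (hs.hasDerivWithinAt_fst t (hsub ht)).mono hsub,
    fun t ht => (hs.hasDerivWithinAt_snd t (hsub ht)).mono hsub⟩

lemma neg (hs : HamiltonSys p q A B μ ν s u z) :
    HamiltonSys p q B A ν μ s (fun t => -u t) (fun t => -z t) := by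
  refine ⟨fun t ht => ?_, fun t ht => ?_⟩
  · rw [asymPow_neg]
    exact (hs.hasDerivWithinAt_fst t ht).neg
  · rw [asymPow_neg]
    exact (hs.hasDerivWithinAt_snd t ht).neg

lemma comp_const_sub (hs : HamiltonSys p q A B μ ν s u z) {s' : Set ℝ} {c : ℝ}
    (hmaps : MapsTo (fun t => c - t) s' s) :
    HamiltonSys p q B A μ ν s' (fun t => u (c - t)) (fun t => -z (c - t)) := by
  have hd (t : ℝ) : HasDerivWithinAt (fun t => c - t) (-1) s' t :=
    (hasDerivWithinAt_id t s').const_sub c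
  refine ⟨fun t ht => ?_, fun t ht => ?_⟩
  · rw [asymPow_neg, ← mul_neg_one]
    exact (hs.hasDerivWithinAt_fst _ (hmaps ht)).comp t (hd t) hmaps
  · refine ((hs.hasDerivWithinAt_snd _ (hmaps ht)).comp t (hd t) hmaps).neg.congr_deriv ?_
    ring

lemma comp_mul_add (hs : HamiltonSys p q A B μ ν s u z) (h : p.HolderConjugate q) {s' : Set ℝ}
    {c d : ℝ} (hc : 0 < c) (hmaps : MapsTo (fun t => c * t + d) s' s) :
    HamiltonSys p q A B (c ^ p * μ) (c ^ p * ν) s' (fun t => u (c * t + d))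
      (fun t => c ^ (p - 1) * z (c * t + d)) := by
  have hd (t : ℝ) : HasDerivWithinAt (fun t => c * t + d) c s' t := by
    simpa using ((hasDerivWithinAt_id t s').const_mul c).add_const d
  refine ⟨fun t ht => ?_, fun t ht => ?_⟩
  · rw [asymPow_mul (by positivity), ← Real.rpow_mul hc.le, sub_one_mul_sub_one_eq_one h,
      Real.rpow_one, mul_comm]
    exact (hs.hasDerivWithinAt_fst _ (hmaps ht)).comp t (hd t) hmaps
  · refine (((hs.hasDerivWithinAt_snd _ (hmaps ht)).comp t (hd t) hmaps).const_mul _).congr_deriv ?_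
    rw [asymPow_mul_left, Real.rpow_sub_one hc.ne']
    field_simp

lemma energy_eq (hs : HamiltonSys p q A B μ ν s u z) (h : p.HolderConjugate q) (hconv : Convex ℝ s)
    {t₀ t : ℝ} (ht₀ : t₀ ∈ s) (ht : t ∈ s) :
    (p - 1) * asymAbsPow q A B (z t) + asymAbsPow p μ ν (u t) =
      (p - 1) * asymAbsPow q A B (z t₀) + asymAbsPow p μ ν (u t₀) := by
  have hd (x : ℝ) (hx : x ∈ s) : HasDerivWithinAt
      (fun x => (p - 1) * asymAbsPow q A B (z x) + asymAbsPow p μ ν (u x)) 0 s x := by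
    refine ((((hasDerivAt_asymAbsPow h.symm.lt A B _).comp_hasDerivWithinAt x
      (hs.hasDerivWithinAt_snd x hx)).const_mul (p - 1)).add
      ((hasDerivAt_asymAbsPow h.lt μ ν _).comp_hasDerivWithinAt x
        (hs.hasDerivWithinAt_fst x hx))).congr_deriv ?_
    linear_combination (-asymPow (q - 1) A B (z x) * asymPow (p - 1) μ ν (u x)) *
      h.sub_one_mul_conj
  have hle := hconv.norm_image_sub_le_of_norm_hasDerivWithin_le (C := 0) hd
    (fun x _ => norm_zero.le) ht₀ ht
  rwa [zero_mul, norm_le_zero_iff, sub_eq_zero] at hle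

lemma eq_zero_of_eq_zero (hs : HamiltonSys p q A B μ ν s u z) (h : p.HolderConjugate q) (hA : 0 < A)
    (hB : 0 < B) (hμ : 0 < μ) (hν : 0 < ν) (hconv : Convex ℝ s) {t₀ t : ℝ} (ht₀ : t₀ ∈ s)
    (hu₀ : u t₀ = 0) (hz₀ : z t₀ = 0) (ht : t ∈ s) : u t = 0 ∧ z t = 0 := by
  have henergy := hs.energy_eq h hconv ht₀ ht
  have hz := mul_nonneg h.sub_one_pos.le (asymAbsPow_nonneg hA.le hB.le q (z t))
  have hu := asymAbsPow_nonneg hμ.le hν.le p (u t)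
  rw [hu₀, hz₀, asymAbsPow_zero h.ne_zero, asymAbsPow_zero h.symm.ne_zero, mul_zero, zero_add]
    at henergy
  constructor <;> by_contra hne
  · linarith [asymAbsPow_pos h.ne_zero hμ hν hne]
  · linarith [mul_pos h.sub_one_pos (asymAbsPow_pos h.symm.ne_zero hA hB hne)]

end HamiltonSys

end HamiltonianSystem

section Pruefer

lemma exists_orderIso_hasDerivAt {ω : ℝ → ℝ} {T : ℝ} (hω : Continuous ω) (hpos : ∀ x, 0 < ω x)
    (hT : 0 < T) (hper : Function.Periodic ω T) :
    ∃ φ : ℝ ≃o ℝ, φ 0 = 0 ∧ ∀ t, HasDerivAt φ (ω (φ t)) t := by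
  have hcont : Continuous fun x => (ω x)⁻¹ := hω.inv₀ fun x => (hpos x).ne'
  let τ (x : ℝ) : ℝ := ∫ y in 0..x, (ω y)⁻¹
  have hτ (x : ℝ) : HasDerivAt τ (ω x)⁻¹ x := hcont.integral_hasStrictDerivAt 0 x |>.hasDerivAt
  have hτ_cont : Continuous τ := continuous_iff_continuousAt.2 fun x => (hτ x).continuousAt
  have hτ_mono : StrictMono τ := strictMono_of_hasDerivAt_pos hτ fun x => inv_pos.2 (hpos x)
  have hper' : Function.Periodic (fun x => (ω x)⁻¹) T := fun x => by simp only [hper x]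
  have hτ_surj : Function.Surjective τ := hτ_cont.surjective
    (hper'.tendsto_atTop_intervalIntegral_of_pos' (hcont.intervalIntegrable _ _)
      (fun x => inv_pos.2 (hpos x)) hT)
    (hper'.tendsto_atBot_intervalIntegral_of_pos' (hcont.intervalIntegrable _ _)
      (fun x => inv_pos.2 (hpos x)) hT)
  let e : ℝ ≃o ℝ := hτ_mono.orderIsoOfSurjective τ hτ_surj
  refine ⟨e.symm, e.symm_apply_eq.2 (by simp [e, τ]), fun t => ?_⟩
  simpa only [inv_inv] using (hτ (e.symm t)).of_local_left_inverse e.symm.continuous.continuousAt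
    (inv_pos.2 (hpos _)).ne' (.of_forall fun y => e.apply_symm_apply y)

variable {p q A B μ ν : ℝ}

/-- The denominator `(p - 1) cos² θ + sin² θ` of the generalized Prüfer equations, which arises on
solving for the derivatives of the angle and of the radius. -/
noncomputable def prueferDenom (p θ : ℝ) : ℝ :=
  (p - 1) * Real.cos θ ^ 2 + Real.sin θ ^ 2

/-- The angular velocity `θ'` of a solution `u = r sin θ`, `z = r^(p-1) cos θ` of `HamiltonSys`. -/
noncomputable def prueferVelocity (p q A B μ ν θ : ℝ) : ℝ :=
  ((p - 1) * asymAbsPow q A B (Real.cos θ) + asymAbsPow p μ ν (Real.sin θ)) / prueferDenom p θ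

/-- The logarithmic derivative `r' / r` of the radius of a solution `u = r sin θ`,
`z = r^(p-1) cos θ` of `HamiltonSys`. -/
noncomputable def prueferGrowth (p q A B μ ν θ : ℝ) : ℝ :=
  (Real.sin θ * asymPow (q - 1) A B (Real.cos θ) -
    Real.cos θ * asymPow (p - 1) μ ν (Real.sin θ)) / prueferDenom p θ

lemma prueferDenom_pos (hp : 1 < p) (θ : ℝ) : 0 < prueferDenom p θ := by
  have hc := mul_nonneg (sub_pos.2 hp).le (sq_nonneg (Real.cos θ))
  rcases eq_or_ne (Real.sin θ) 0 with hs | hs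
  · have hcos : Real.cos θ ^ 2 = 1 := by simpa [hs] using Real.sin_sq_add_cos_sq θ
    simpa [prueferDenom, hs, hcos] using hp
  · exact add_pos_of_nonneg_of_pos hc (by positivity)

lemma continuous_prueferDenom (p : ℝ) : Continuous (prueferDenom p) := by
  unfold prueferDenom
  fun_prop

lemma continuous_prueferVelocity (h : p.HolderConjugate q) :
    Continuous (prueferVelocity p q A B μ ν) :=
  (((continuous_asymAbsPow h.symm.lt).comp Real.continuous_cos).const_mul _ |>.add
    ((continuous_asymAbsPow h.lt).comp Real.continuous_sin)).div (continuous_prueferDenom p)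
    fun θ => (prueferDenom_pos h.lt θ).ne'

lemma continuous_prueferGrowth (h : p.HolderConjugate q) :
    Continuous (prueferGrowth p q A B μ ν) :=
  ((Real.continuous_sin.mul
    ((continuous_asymPow h.symm.sub_one_pos.le).comp Real.continuous_cos)).sub
    (Real.continuous_cos.mul
      ((continuous_asymPow h.sub_one_pos.le).comp Real.continuous_sin))).div
    (continuous_prueferDenom p) fun θ => (prueferDenom_pos h.lt θ).ne'

lemma prueferVelocity_pos (h : p.HolderConjugate q) (hA : 0 < A) (hB : 0 < B) (hμ : 0 < μ)
    (hν : 0 < ν) (θ : ℝ) : 0 < prueferVelocity p q A B μ ν θ := by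
  refine div_pos ?_ (prueferDenom_pos h.lt θ)
  have hcos := mul_nonneg h.sub_one_pos.le (asymAbsPow_nonneg hA.le hB.le q (Real.cos θ))
  rcases eq_or_ne (Real.sin θ) 0 with hs | hs
  · have hc : Real.cos θ ≠ 0 := fun hc => by simpa [hs, hc] using Real.sin_sq_add_cos_sq θ
    exact add_pos_of_pos_of_nonneg
      (mul_pos h.sub_one_pos (asymAbsPow_pos h.symm.ne_zero hA hB hc))
      (asymAbsPow_nonneg hμ.le hν.le _ _)
  · exact add_pos_of_nonneg_of_pos hcos (asymAbsPow_pos h.ne_zero hμ hν hs)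

lemma periodic_prueferVelocity (p q A B μ ν : ℝ) :
    Function.Periodic (prueferVelocity p q A B μ ν) (2 * Real.pi) := fun θ => by
  simp only [prueferVelocity, prueferDenom, Real.cos_add_two_pi, Real.sin_add_two_pi]

lemma sin_mul_prueferGrowth_add (h : p.HolderConjugate q) (θ : ℝ) :
    Real.sin θ * prueferGrowth p q A B μ ν θ + Real.cos θ * prueferVelocity p q A B μ ν θ =
      asymPow (q - 1) A B (Real.cos θ) := by
  have hD := (prueferDenom_pos h.lt θ).ne'
  rw [prueferGrowth, prueferVelocity, ← asymPow_sub_one_mul_self h.lt,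
    ← asymPow_sub_one_mul_self h.symm.lt]
  field_simp
  rw [prueferDenom]
  ring

lemma sub_one_mul_cos_mul_prueferGrowth_sub (h : p.HolderConjugate q) (θ : ℝ) :
    (p - 1) * Real.cos θ * prueferGrowth p q A B μ ν θ -
      Real.sin θ * prueferVelocity p q A B μ ν θ = -asymPow (p - 1) μ ν (Real.sin θ) := by
  have hD := (prueferDenom_pos h.lt θ).ne'
  rw [prueferGrowth, prueferVelocity, ← asymPow_sub_one_mul_self h.lt,
    ← asymPow_sub_one_mul_self h.symm.lt]
  field_simp
  rw [prueferDenom]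
  ring

lemma hamiltonSys_of_pruefer (h : p.HolderConjugate q) {r θ : ℝ → ℝ} (hr_pos : ∀ t, 0 < r t)
    (hr : ∀ t, HasDerivAt r (r t * prueferGrowth p q A B μ ν (θ t)) t)
    (hθ : ∀ t, HasDerivAt θ (prueferVelocity p q A B μ ν (θ t)) t) :
    HamiltonSys p q A B μ ν univ (fun t => r t * Real.sin (θ t))
      (fun t => r t ^ (p - 1) * Real.cos (θ t)) := by
  refine ⟨fun t _ => HasDerivAt.hasDerivWithinAt ?_, fun t _ => HasDerivAt.hasDerivWithinAt ?_⟩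
  · refine ((hr t).mul (hθ t).sin).congr_deriv ?_
    rw [asymPow_mul (Real.rpow_pos_of_pos (hr_pos t) _).le, ← Real.rpow_mul (hr_pos t).le,
      sub_one_mul_sub_one_eq_one h, Real.rpow_one]
    linear_combination r t * sin_mul_prueferGrowth_add h (θ t)
  · refine (((hr t).rpow_const (Or.inl (hr_pos t).ne')).mul (hθ t).cos).congr_deriv ?_
    rw [asymPow_mul (hr_pos t).le, Real.rpow_sub_one (hr_pos t).ne' (p - 1)]
    have := (hr_pos t).ne'
    field_simp
    linear_combination r t ^ (p - 1) * sub_one_mul_cos_mul_prueferGrowth_sub h (θ t)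

lemma exists_pos_hasDerivAt_mul {k : ℝ → ℝ} (hk : Continuous k) :
    ∃ r : ℝ → ℝ, (∀ t, 0 < r t) ∧ ∀ t, HasDerivAt r (r t * k t) t :=
  ⟨fun t => Real.exp (∫ x in 0..t, k x), fun _ => Real.exp_pos _,
    fun t => (hk.integral_hasStrictDerivAt 0 t).hasDerivAt.exp⟩

lemma exists_hamiltonSys_univ (h : p.HolderConjugate q) (hA : 0 < A) (hB : 0 < B) (hμ : 0 < μ)
    (hν : 0 < ν) : ∃ u z : ℝ → ℝ, HamiltonSys p q A B μ ν univ u z ∧ u 0 = 0 ∧ 0 < z 0 ∧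
      ∀ T, ∃ t > T, u t = 0 := by
  obtain ⟨θ, hθ0, hθ⟩ := exists_orderIso_hasDerivAt (continuous_prueferVelocity h)
    (prueferVelocity_pos h hA hB hμ hν) Real.two_pi_pos (periodic_prueferVelocity p q A B μ ν)
  obtain ⟨r, hr_pos, hr⟩ := exists_pos_hasDerivAt_mul
    ((continuous_prueferGrowth (A := A) (B := B) (μ := μ) (ν := ν) h).comp θ.continuous)
  refine ⟨_, _, hamiltonSys_of_pruefer h hr_pos hr hθ, by simp [hθ0], ?_, fun T => ?_⟩
  · simpa [hθ0] using Real.rpow_pos_of_pos (hr_pos 0) _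
  · obtain ⟨n, hn⟩ := exists_nat_gt (θ T / Real.pi)
    refine ⟨θ.symm (n * Real.pi), θ.lt_symm_apply.2 ((div_lt_iff₀ Real.pi_pos).1 hn), ?_⟩
    rw [θ.apply_symm_apply, Real.sin_nat_mul_pi, mul_zero]

end Pruefer

section WeakSolutions

variable {p q a b L μ ν : ℝ} {u u' y y' g z φ φ' : ℝ → ℝ}

lemma C1On.continuousOn {α γ : ℝ} (hu : C1On α γ u u') : ContinuousOn u (Icc α γ) :=
  fun t ht => (hu.1 t ht).continuousWithinAt

lemma c1On_integral {α γ : ℝ} (hg : ContinuousOn g (Icc α γ)) :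
    C1On α γ (fun t => ∫ x in α..t, g x) g := by
  refine ⟨fun t ht => ?_, hg⟩
  have : Fact (t ∈ Icc α γ) := ⟨ht⟩
  exact intervalIntegral.integral_hasDerivWithinAt_right
    ((hg.mono (Icc_subset_Icc_right ht.2)).intervalIntegrable_of_Icc ht.1)
    (hg.stronglyMeasurableAtFilter_nhdsWithin measurableSet_Icc t) (hg t ht)

lemma C1On.integral_mul_deriv_of_adm (hy : C1On 0 L y y') (hφ : Adm L φ φ') (hL : 0 ≤ L) :
    (∫ t in (0 : ℝ)..L, y t * φ' t) = -∫ t in (0 : ℝ)..L, y' t * φ t := by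
  rw [intervalIntegral.integral_mul_deriv_eq_deriv_mul_of_hasDerivWithinAt
    (uIcc_of_le hL ▸ hy.1) (uIcc_of_le hL ▸ hφ.1.1) (hy.2.intervalIntegrable_of_Icc hL)
    (hφ.1.2.intervalIntegrable_of_Icc hL), hφ.2.1, hφ.2.2]
  simp

lemma eqOn_zero_of_integral_sq_eq_zero (hL : 0 < L) (hy : ContinuousOn y (Icc 0 L))
    (hint : (∫ t in (0 : ℝ)..L, y t ^ 2) = 0) : EqOn y 0 (Icc 0 L) := by
  intro t ht
  by_contra hne
  exact (intervalIntegral.integral_pos hL (hy.pow 2) (fun _ _ => sq_nonneg _)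
    ⟨t, ht, sq_pos_of_ne_zero hne⟩).ne' hint

lemma exists_const_of_forall_integral_mul_deriv_eq_zero (hL : 0 < L)
    (hy : ContinuousOn y (Icc 0 L))
    (hweak : ∀ φ φ' : ℝ → ℝ, Adm L φ φ' → (∫ t in (0 : ℝ)..L, y t * φ' t) = 0) :
    ∃ c, ∀ t ∈ Icc 0 L, y t = c := by
  set c := (∫ t in (0 : ℝ)..L, y t) / L with hc
  have hyc : ContinuousOn (fun t => y t - c) (Icc 0 L) := hy.sub continuousOn_const
  have hint {f : ℝ → ℝ} (hf : ContinuousOn f (Icc 0 L)) :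
      IntervalIntegrable f MeasureTheory.volume 0 L := hf.intervalIntegrable_of_Icc hL.le
  have hmean : (∫ t in (0 : ℝ)..L, (y t - c)) = 0 := by
    rw [intervalIntegral.integral_sub (hint hy) (hint continuousOn_const),
      intervalIntegral.integral_const, smul_eq_mul, hc]
    field_simp
    ring
  have hsq : (∫ t in (0 : ℝ)..L, (y t - c) ^ 2) = 0 := by
    have htest := hweak _ _ ⟨c1On_integral hyc, intervalIntegral.integral_same, hmean⟩
    have hsplit (t : ℝ) : (y t - c) ^ 2 = y t * (y t - c) - c * (y t - c) := by ring
    simp only [hsplit]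
    rw [intervalIntegral.integral_sub (hint (hy.fun_mul hyc)) (hint (hyc.const_mul c)), htest,
      intervalIntegral.integral_const_mul, hmean, mul_zero, sub_zero]
  exact ⟨c, fun t ht => sub_eq_zero.1 (eqOn_zero_of_integral_sq_eq_zero hL hyc hsq ht)⟩

lemma hasDerivWithinAt_neg_of_weak (hL : 0 < L) (hz : ContinuousOn z (Icc 0 L))
    (hg : ContinuousOn g (Icc 0 L))
    (hweak : ∀ φ φ' : ℝ → ℝ, Adm L φ φ' →
      (∫ t in (0 : ℝ)..L, z t * φ' t) = ∫ t in (0 : ℝ)..L, g t * φ t)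
    {t : ℝ} (ht : t ∈ Icc 0 L) : HasDerivWithinAt z (-g t) (Icc 0 L) t := by
  let G (t : ℝ) : ℝ := ∫ x in 0..t, g x
  have hG : C1On 0 L G g := c1On_integral hg
  obtain ⟨c, hc⟩ := exists_const_of_forall_integral_mul_deriv_eq_zero hL
    (hz.add hG.continuousOn) fun φ φ' hφ => by
      simp only [Pi.add_apply, add_mul]
      rw [intervalIntegral.integral_add
        ((hz.fun_mul hφ.1.2).intervalIntegrable_of_Icc hL.le)
        ((hG.continuousOn.fun_mul hφ.1.2).intervalIntegrable_of_Icc hL.le), hweak φ φ' hφ,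
        hG.integral_mul_deriv_of_adm hφ hL.le, add_neg_cancel]
  exact ((hG.1 t ht).const_sub c).congr_of_mem (fun x hx => eq_sub_of_add_eq (hc x hx)) ht

lemma IsWeakSol.hamiltonSys (h : p.HolderConjugate q) (ha : 0 < a) (hb : 0 < b) (hL : 0 < L)
    (hu : IsWeakSol p a b L u u' fun t => asymPow (p - 1) μ ν (u t)) :
    HamiltonSys p q (a ^ (-q)) (b ^ (-q)) μ ν (Icc 0 L) u fun t => asymFlux p a b (u' t) := by
  obtain ⟨⟨hC1, -, -⟩, hweak⟩ := hu
  refine ⟨fun t ht => ?_, fun t ht => hasDerivWithinAt_neg_of_weak hL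
    ((continuous_asymFlux h.lt.le).comp_continuousOn hC1.2)
    ((continuous_asymPow h.sub_one_pos.le).comp_continuousOn hC1.continuousOn) hweak ht⟩
  rw [leftInverse_asymFlux h ha hb]
  exact hC1.1 t ht

lemma HamiltonSys.isWeakSol (hs : HamiltonSys p q (a ^ (-q)) (b ^ (-q)) μ ν (Icc 0 L) u z)
    (h : p.HolderConjugate q) (ha : 0 < a) (hb : 0 < b) (hL : 0 ≤ L) (hu0 : u 0 = 0)
    (huL : u L = 0) :
    IsWeakSol p a b L u (fun t => asymPow (q - 1) (a ^ (-q)) (b ^ (-q)) (z t))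
      fun t => asymPow (p - 1) μ ν (u t) := by
  refine ⟨⟨⟨hs.hasDerivWithinAt_fst, (continuous_asymPow h.symm.sub_one_pos.le).comp_continuousOn
    hs.continuousOn_snd⟩, hu0, huL⟩, fun φ φ' hφ => ?_⟩
  have hz : C1On 0 L z fun t => -asymPow (p - 1) μ ν (u t) :=
    ⟨hs.hasDerivWithinAt_snd,
      ((continuous_asymPow h.sub_one_pos.le).comp_continuousOn hs.continuousOn_fst).neg⟩
  simp only [rightInverse_asymFlux h ha hb _]
  simpa using hz.integral_mul_deriv_of_adm hφ hL

lemma HamiltonSys.exists_ne_zero_iff {A B α β : ℝ}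
    (hs : HamiltonSys p q A B μ ν (Icc α β) u z) (h : p.HolderConjugate q) (hA : 0 < A) (hB : 0 < B)
    (hμ : 0 < μ) (hν : 0 < ν) (hαβ : α < β) (hu : u α = 0) :
    (∃ t ∈ Icc α β, u t ≠ 0) ↔ z α ≠ 0 := by
  have hα : α ∈ Icc α β := left_mem_Icc.2 hαβ.le
  constructor
  · rintro ⟨t, ht, hne⟩ hz
    exact hne (hs.eq_zero_of_eq_zero h hA hB hμ hν (convex_Icc α β) hα hu hz ht).1
  · intro hz
    by_contra! hzero
    have hderiv : asymPow (q - 1) A B (z α) = 0 := (uniqueDiffOn_Icc hαβ α hα).eq_deriv _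
      (hs.hasDerivWithinAt_fst α hα) ((hasDerivWithinAt_const α _ 0).congr_of_mem hzero hα)
    have hpos := asymAbsPow_pos h.symm.ne_zero hA hB hz
    rw [← asymPow_sub_one_mul_self h.symm.lt, hderiv, zero_mul] at hpos
    exact hpos.false

lemma exists_isWeakSol_iff_exists_hamiltonSys (h : p.HolderConjugate q) (ha : 0 < a) (hb : 0 < b)
    (hL : 0 < L) (hμ : 0 < μ) (hν : 0 < ν) :
    (∃ u u' : ℝ → ℝ, IsWeakSol p a b L u u' (fun t => asymPow (p - 1) μ ν (u t)) ∧
        ∃ t ∈ Icc 0 L, u t ≠ 0) ↔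
      ∃ u z : ℝ → ℝ, HamiltonSys p q (a ^ (-q)) (b ^ (-q)) μ ν (Icc 0 L) u z ∧
        u 0 = 0 ∧ u L = 0 ∧ z 0 ≠ 0 := by
  have hA : 0 < a ^ (-q) := Real.rpow_pos_of_pos ha _
  have hB : 0 < b ^ (-q) := Real.rpow_pos_of_pos hb _
  constructor
  · rintro ⟨u, u', hu, hne⟩
    have hs := hu.hamiltonSys h ha hb hL
    exact ⟨u, _, hs, hu.1.2.1, hu.1.2.2,
      (hs.exists_ne_zero_iff h hA hB hμ hν hL hu.1.2.1).1 hne⟩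
  · rintro ⟨u, z, hs, hu0, huL, hz⟩
    exact ⟨u, _, hs.isWeakSol h ha hb hL.le hu0 huL,
      (hs.exists_ne_zero_iff h hA hB hμ hν hL hu0).2 hz⟩

end WeakSolutions

section FirstEigenvalue

variable {p q a b L μ ν : ℝ} {u z v v' : ℝ → ℝ}

lemma asymE_neg (p a b s : ℝ) : asymE p a b (-s) = asymE p b a s :=
  asymAbsPow_neg p (a ^ p) (b ^ p) s

lemma asymE_mul {c : ℝ} (hc : 0 ≤ c) (s : ℝ) : asymE p a b (c * s) = c ^ p * asymE p a b s :=
  asymAbsPow_mul hc s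

lemma continuous_asymE (hp : 1 < p) : Continuous (asymE p a b) :=
  continuous_asymAbsPow hp

lemma C1On.const_mul {α γ : ℝ} (hv : C1On α γ v v') (c : ℝ) :
    C1On α γ (fun t => c * v t) (fun t => c * v' t) :=
  ⟨fun t ht => (hv.1 t ht).const_mul c, hv.2.const_mul c⟩

lemma Adm.const_mul (hv : Adm L v v') (c : ℝ) : Adm L (fun t => c * v t) (fun t => c * v' t) :=
  ⟨hv.1.const_mul c, by simp [hv.2.1], by simp [hv.2.2]⟩

lemma lam1_eq_of_isMinimizer (hp : 0 < p) {m : ℝ}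
    (hlow : ∀ v v' : ℝ → ℝ, Adm L v v' →
      m * (∫ t in (0 : ℝ)..L, |v t| ^ p) ≤ ∫ t in (0 : ℝ)..L, asymE p a b (v' t))
    (hv : Adm L v v') (hnorm : 0 < ∫ t in (0 : ℝ)..L, |v t| ^ p)
    (henergy : (∫ t in (0 : ℝ)..L, asymE p a b (v' t)) = m * ∫ t in (0 : ℝ)..L, |v t| ^ p) :
    lam1 p a b L = m := by
  refine IsLeast.csInf_eq ⟨?_, ?_⟩
  · set I := ∫ t in (0 : ℝ)..L, |v t| ^ p with hI
    set c := I ^ (-(1 / p)) with hc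
    have hc_pos : 0 < c := Real.rpow_pos_of_pos hnorm _
    have hcI : c ^ p * I = 1 := by
      rw [hc, ← Real.rpow_mul hnorm.le, neg_mul, one_div_mul_cancel hp.ne', Real.rpow_neg_one,
        inv_mul_cancel₀ hnorm.ne']
    refine ⟨_, _, hv.const_mul c, ?_, ?_⟩
    · simp only [abs_mul, abs_of_pos hc_pos, Real.mul_rpow hc_pos.le (abs_nonneg _),
        intervalIntegral.integral_const_mul, ← hI, hcI]
    · simp only [asymE_mul hc_pos.le, intervalIntegral.integral_const_mul, henergy]
      linear_combination -m * hcI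
  · rintro E ⟨v, v', hv, hnorm, rfl⟩
    simpa [hnorm] using hlow v v' hv

lemma lam1_swap (p a b L : ℝ) : lam1 p b a L = lam1 p a b L := by
  have hsub (a b : ℝ) : {E : ℝ | ∃ u u' : ℝ → ℝ, Adm L u u' ∧
      (∫ t in (0 : ℝ)..L, |u t| ^ p) = 1 ∧ E = ∫ t in (0 : ℝ)..L, asymE p a b (u' t)} ⊆
      {E : ℝ | ∃ u u' : ℝ → ℝ, Adm L u u' ∧
        (∫ t in (0 : ℝ)..L, |u t| ^ p) = 1 ∧ E = ∫ t in (0 : ℝ)..L, asymE p b a (u' t)} := by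
    rintro E ⟨u, u', hu, hnorm, rfl⟩
    exact ⟨_, _, hu.const_mul (-1), by simpa using hnorm, by simp [asymE_neg]⟩
  exact congrArg sInf ((hsub b a).antisymm (hsub a b))

lemma HamiltonSys.hasDerivWithinAt_div_rpow {A B : ℝ} {s : Set ℝ}
    (hs : HamiltonSys p q A B μ ν s u z) (h : p.HolderConjugate q) {t : ℝ} (ht : t ∈ s)
    (hu : 0 < u t) :
    HasDerivWithinAt (fun t => z t / u t ^ (p - 1))
      (-(μ + (p - 1) * asymAbsPow q A B (z t / u t ^ (p - 1)))) s t := by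
  have hpow : ((u t ^ (p - 1))⁻¹) ^ q = (u t ^ p)⁻¹ := by
    rw [Real.inv_rpow (by positivity), ← Real.rpow_mul hu.le, h.sub_one_mul_conj]
  refine ((hs.hasDerivWithinAt_snd t ht).div ((hs.hasDerivWithinAt_fst t ht).rpow_const
    (Or.inl hu.ne')) (by positivity)).congr_deriv ?_
  rw [div_eq_inv_mul (z t), asymAbsPow_mul (by positivity), hpow,
    asymPow_of_nonneg h.sub_one_ne_zero hu.le, ← asymPow_sub_one_mul_self h.symm.lt,
    Real.rpow_sub_one hu.ne' (p - 1), Real.rpow_sub_one hu.ne' p]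
  field_simp
  ring

lemma picone_le_asymE (h : p.HolderConjugate q) (ha : 0 < a) (hb : 0 < b) {x : ℝ} (hx : 0 ≤ x)
    (w y : ℝ) :
    p * (w * x ^ (p - 1) * y) - (p - 1) * asymAbsPow q (a ^ (-q)) (b ^ (-q)) w * x ^ p ≤
      asymE p a b y := by
  have young := mul_le_asymE h ha hb (x ^ (p - 1) * w) y
  rw [asymAbsPow_mul (by positivity), ← Real.rpow_mul hx, h.sub_one_mul_conj] at young
  linarith

/-- The left-hand side is the derivative of `W (v⁺)^p + X (v⁻)^p`, with `x = v`, `y = v'`, when `W`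
and `X` solve the Riccati equations of the two reflected problems. -/
lemma riccati_mul_add_le (h : p.HolderConjugate q) (ha : 0 < a) (hb : 0 < b) (w₁ w₂ x y : ℝ) :
    -(μ + (p - 1) * asymAbsPow q (a ^ (-q)) (b ^ (-q)) w₁) * (max x 0) ^ p +
        w₁ * (p * (max x 0) ^ (p - 1) * y) +
      (-(μ + (p - 1) * asymAbsPow q (b ^ (-q)) (a ^ (-q)) w₂) * (max (-x) 0) ^ p +
        w₂ * (p * (max (-x) 0) ^ (p - 1) * -y)) ≤
      asymE p a b y - μ * |x| ^ p := by
  wlog hx : 0 ≤ x generalizing a b w₁ w₂ x y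
  · have := this hb ha w₂ w₁ (-x) (-y) (by linarith)
    rw [asymE_neg, abs_neg, neg_neg, neg_neg] at this
    linarith
  rw [max_eq_left hx, max_eq_right (neg_nonpos.2 hx), abs_of_nonneg hx,
    Real.zero_rpow h.ne_zero, Real.zero_rpow h.sub_one_ne_zero]
  linarith [picone_le_asymE h ha hb hx w₁ y]

lemma mul_integral_le_of_riccati (h : p.HolderConjugate q) (ha : 0 < a) (hb : 0 < b) (hL : 0 ≤ L)
    {W X : ℝ → ℝ}
    (hW : ∀ t ∈ Icc 0 L, HasDerivWithinAt W
      (-(μ + (p - 1) * asymAbsPow q (a ^ (-q)) (b ^ (-q)) (W t))) (Icc 0 L) t)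
    (hX : ∀ t ∈ Icc 0 L, HasDerivWithinAt X
      (-(μ + (p - 1) * asymAbsPow q (b ^ (-q)) (a ^ (-q)) (X t))) (Icc 0 L) t)
    (hv : Adm L v v') :
    μ * (∫ t in (0 : ℝ)..L, |v t| ^ p) ≤ ∫ t in (0 : ℝ)..L, asymE p a b (v' t) := by
  have hp := h.lt
  let S (t : ℝ) : ℝ := W t * (max (v t) 0) ^ p + X t * (max (-v t) 0) ^ p
  have hS (t : ℝ) (ht : t ∈ Icc 0 L) := ((hW t ht).mul
    ((hasDerivAt_max_zero_rpow hp _).comp_hasDerivWithinAt t (hv.1.1 t ht))).add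
    ((hX t ht).mul ((hasDerivAt_max_zero_rpow hp _).comp_hasDerivWithinAt t (hv.1.1 t ht).neg))
  have hcont_energy : ContinuousOn (fun t => asymE p a b (v' t)) (Icc 0 L) :=
    (continuous_asymE hp).comp_continuousOn hv.1.2
  have hcont_norm : ContinuousOn (fun t => μ * |v t| ^ p) (Icc 0 L) :=
    (hv.1.continuousOn.abs.rpow_const fun _ _ => Or.inr h.nonneg).const_mul μ
  have hle := intervalIntegral.sub_le_integral_of_hasDeriv_right_of_le (g := S) hL
    (fun t ht => (hS t ht).continuousWithinAt)
    (fun t ht => ((hS t (Ioo_subset_Icc_self ht)).hasDerivAt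
      (Icc_mem_nhds ht.1 ht.2)).hasDerivWithinAt)
    (hcont_energy.sub hcont_norm).integrableOn_Icc
    fun t _ => riccati_mul_add_le h ha hb (W t) (X t) (v t) (v' t)
  rw [← intervalIntegral.integral_const_mul, ← sub_nonneg, ← intervalIntegral.integral_sub
    (hcont_energy.intervalIntegrable_of_Icc hL) (hcont_norm.intervalIntegrable_of_Icc hL)]
  simpa [S, hv.2.1, hv.2.2, Real.zero_rpow h.ne_zero] using hle

lemma HamiltonSys.mul_integral_le_of_pos
    (hs : HamiltonSys p q (a ^ (-q)) (b ^ (-q)) μ ν (Icc 0 L) u z) (h : p.HolderConjugate q)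
    (ha : 0 < a) (hb : 0 < b) (hL : 0 ≤ L) (hu : ∀ t ∈ Icc 0 L, 0 < u t) (hv : Adm L v v') :
    μ * (∫ t in (0 : ℝ)..L, |v t| ^ p) ≤ ∫ t in (0 : ℝ)..L, asymE p a b (v' t) := by
  have hmaps : MapsTo (fun t => L - t) (Icc 0 L) (Icc 0 L) :=
    fun t ht => ⟨by linarith [ht.2], by linarith [ht.1]⟩
  exact mul_integral_le_of_riccati h ha hb hL
    (fun t ht => hs.hasDerivWithinAt_div_rpow h ht (hu t ht))
    (fun t ht => (hs.comp_const_sub hmaps).hasDerivWithinAt_div_rpow h ht (hu _ (hmaps ht))) hv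

lemma HamiltonSys.mul_integral_le
    (hs : HamiltonSys p q (a ^ (-q)) (b ^ (-q)) μ ν (Icc 0 L) u z) (h : p.HolderConjugate q)
    (ha : 0 < a) (hb : 0 < b) (hL : 0 < L) (hu : ∀ t ∈ Ioo 0 L, 0 < u t) (hv : Adm L v v') :
    μ * (∫ t in (0 : ℝ)..L, |v t| ^ p) ≤ ∫ t in (0 : ℝ)..L, asymE p a b (v' t) := by
  have hshrink (c : ℝ) (hc : c ∈ Ioo (0 : ℝ) 1) :
      c ^ p * μ * (∫ t in (0 : ℝ)..L, |v t| ^ p) ≤ ∫ t in (0 : ℝ)..L, asymE p a b (v' t) := by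
    have hmaps : MapsTo (fun t => c * t + (1 - c) * L / 2) (Icc 0 L) (Ioo 0 L) := fun t ht =>
      ⟨by nlinarith [hc.1, hc.2, ht.1], by nlinarith [hc.1, hc.2, ht.2]⟩
    exact ((hs.mono Ioo_subset_Icc_self).comp_mul_add h hc.1 hmaps).mul_integral_le_of_pos h ha hb
      hL.le (fun t ht => hu _ (hmaps ht)) hv
  have hlim : Filter.Tendsto (fun c : ℝ => c ^ p * μ * ∫ t in (0 : ℝ)..L, |v t| ^ p)
      (nhdsWithin 1 (Iio 1)) (nhds (1 ^ p * μ * ∫ t in (0 : ℝ)..L, |v t| ^ p)) :=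
    ((Real.continuous_rpow_const h.nonneg).mul_const μ |>.mul_const _).continuousWithinAt
  rw [Real.one_rpow, one_mul] at hlim
  exact le_of_tendsto hlim (Filter.eventually_of_mem (Ioo_mem_nhdsLT one_pos) hshrink)

lemma HamiltonSys.integral_asymE (hs : HamiltonSys p q (a ^ (-q)) (b ^ (-q)) μ ν (Icc 0 L) u z)
    (h : p.HolderConjugate q) (ha : 0 < a) (hb : 0 < b) (hL : 0 ≤ L) (hu0 : u 0 = 0)
    (huL : u L = 0) :
    (∫ t in (0 : ℝ)..L, asymE p a b (asymPow (q - 1) (a ^ (-q)) (b ^ (-q)) (z t))) =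
      ∫ t in (0 : ℝ)..L, asymAbsPow p μ ν (u t) := by
  obtain ⟨hadm, hweak⟩ := hs.isWeakSol h ha hb hL hu0 huL
  simpa only [asymFlux_mul_self h.lt, asymPow_sub_one_mul_self h.lt] using hweak _ _ hadm

lemma HamiltonSys.lam1_eq (hs : HamiltonSys p q (a ^ (-q)) (b ^ (-q)) μ ν (Icc 0 L) u z)
    (h : p.HolderConjugate q) (ha : 0 < a) (hb : 0 < b) (hL : 0 < L) (hu0 : u 0 = 0)
    (huL : u L = 0) (hu : ∀ t ∈ Ioo 0 L, 0 < u t) : lam1 p a b L = μ := by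
  have hnonneg (t : ℝ) (ht : t ∈ uIcc 0 L) : 0 ≤ u t := by
    rw [uIcc_of_le hL.le] at ht
    rcases eq_endpoints_or_mem_Ioo_of_mem_Icc ht with rfl | rfl | ht
    exacts [hu0.ge, huL.ge, (hu t ht).le]
  refine lam1_eq_of_isMinimizer h.pos (fun v v' hv => hs.mul_integral_le h ha hb hL hu hv)
    (hs.isWeakSol h ha hb hL.le hu0 huL).1 ?_ ?_
  · have hhalf : L / 2 ∈ Ioo 0 L := ⟨half_pos hL, half_lt_self hL⟩
    exact intervalIntegral.integral_pos hL
      (hs.continuousOn_fst.abs.rpow_const fun _ _ => Or.inr h.nonneg) (fun _ _ => by positivity)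
      ⟨L / 2, Ioo_subset_Icc_self hhalf, Real.rpow_pos_of_pos (abs_pos.2 (hu _ hhalf).ne') p⟩
  · rw [hs.integral_asymE h ha hb hL.le hu0 huL, ← intervalIntegral.integral_const_mul]
    refine intervalIntegral.integral_congr fun t ht => ?_
    simp only [asymAbsPow_of_nonneg h.ne_zero (hnonneg t ht), abs_of_nonneg (hnonneg t ht)]

lemma HamiltonSys.lam1_eq_rpow_mul {α β : ℝ}
    (hs : HamiltonSys p q (a ^ (-q)) (b ^ (-q)) μ ν (Icc α β) u z) (h : p.HolderConjugate q)
    (ha : 0 < a) (hb : 0 < b) (hL : 0 < L) (hαβ : α < β) (huα : u α = 0) (huβ : u β = 0)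
    (hu : ∀ t ∈ Ioo α β, 0 < u t) : lam1 p a b L = ((β - α) / L) ^ p * μ := by
  have hc : 0 < (β - α) / L := div_pos (sub_pos.2 hαβ) hL
  have hcL : (β - α) / L * L + α = β := by field_simp; ring
  have hmaps : MapsTo (fun t => (β - α) / L * t + α) (Icc 0 L) (Icc α β) := fun t ht =>
    ⟨by nlinarith [ht.1], by nlinarith [ht.2]⟩
  exact (hs.comp_mul_add h hc hmaps).lam1_eq h ha hb hL (by simpa using huα) (by rwa [hcL])
    fun t ht => hu _ ⟨by nlinarith [ht.1], by nlinarith [ht.2]⟩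

end FirstEigenvalue

section NodalIntervals

lemma eventually_pos_of_hasDerivWithinAt_Ioi {u : ℝ → ℝ} {d α : ℝ}
    (hd : HasDerivWithinAt u d (Ioi α) α) (hd_pos : 0 < d) (hα : u α = 0) :
    ∀ᶠ t in nhdsWithin α (Ioi α), 0 < u t := by
  rw [hasDerivWithinAt_iff_tendsto_slope' self_notMem_Ioi] at hd
  filter_upwards [hd.eventually (lt_mem_nhds hd_pos), self_mem_nhdsWithin] with t hslope ht
  rw [slope_def_field, hα, sub_zero] at hslope
  exact (div_pos_iff_of_pos_right (sub_pos.2 ht)).1 hslope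

lemma nonpos_of_hasDerivWithinAt_of_forall_pos {u : ℝ → ℝ} {d α β : ℝ} (hαβ : α < β)
    (hd : HasDerivWithinAt u d (Icc α β) β) (hpos : ∀ t ∈ Ioo α β, 0 < u t) (hβ : u β = 0) :
    d ≤ 0 := by
  have hslope := (hasDerivWithinAt_iff_tendsto_slope' right_notMem_Ioo).1
    (hd.mono Ioo_subset_Icc_self)
  have : (nhdsWithin β (Ioo α β)).NeBot := right_nhdsWithin_Ioo_neBot hαβ
  refine le_of_tendsto hslope (Filter.eventually_of_mem self_mem_nhdsWithin fun t ht => ?_)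
  rw [slope_def_field, hβ, sub_zero]
  exact div_nonpos_of_nonneg_of_nonpos (hpos t ht).le (sub_nonpos.2 ht.2.le)

lemma exists_first_zero {u : ℝ → ℝ} {d α L : ℝ} (hαL : α < L) (hu : ContinuousOn u (Icc α L))
    (hd : HasDerivWithinAt u d (Icc α L) α) (hd_pos : 0 < d) (huα : u α = 0) (huL : u L = 0) :
    ∃ β ∈ Ioc α L, u β = 0 ∧ ∀ t ∈ Ioo α β, 0 < u t := by
  have hd' : HasDerivWithinAt u d (Ioi α) α :=
    (hd.mono_of_mem_nhdsWithin (Icc_mem_nhdsGE hαL)).Ioi_of_Ici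
  obtain ⟨γ, hαγ, hpos⟩ := (mem_nhdsGT_iff_exists_Ioo_subset).1
    (eventually_pos_of_hasDerivWithinAt_Ioi hd' hd_pos huα)
  have hγL : γ ≤ L := not_lt.1 fun hLγ => (hpos ⟨hαL, hLγ⟩ : 0 < u L).ne' huL
  have hsub : Icc γ L ⊆ Icc α L := Icc_subset_Icc_left (le_of_lt hαγ)
  have hcompact : IsCompact (Icc γ L ∩ u ⁻¹' {0}) := isCompact_Icc.of_isClosed_subset
    ((hu.mono hsub).preimage_isClosed_of_isClosed isClosed_Icc isClosed_singleton) inter_subset_left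
  obtain ⟨β, ⟨hβ, huβ⟩, hmin⟩ := hcompact.exists_isLeast ⟨L, right_mem_Icc.2 hγL, huL⟩
  refine ⟨β, ⟨hαγ.trans_le hβ.1, hβ.2⟩, huβ, fun t ht => ?_⟩
  rcases lt_or_ge t γ with htγ | htγ
  · exact hpos ⟨ht.1, htγ⟩
  by_contra! hut
  obtain ⟨x, hx⟩ := nonempty_Ioo.2 (mem_Ioi.1 hαγ)
  have hxt : x ≤ t := hx.2.le.trans htγ
  obtain ⟨y, hy, huy⟩ := intermediate_value_Icc' hxt
    (hu.mono (Icc_subset_Icc hx.1.le (ht.2.le.trans hβ.2))) ⟨hut, (hpos hx).le⟩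
  have hγy : γ ≤ y := not_lt.1 fun hyγ => (hpos ⟨hx.1.trans_le hy.1, hyγ⟩ : 0 < u y).ne' huy
  exact (hy.2.trans_lt ht.2).not_ge (hmin ⟨⟨hγy, hy.2.trans (ht.2.le.trans hβ.2)⟩, huy⟩)

variable {p q a b α L μ ν : ℝ} {u z : ℝ → ℝ}

lemma HamiltonSys.exists_hump {A B : ℝ} (hs : HamiltonSys p q A B μ ν (Icc α L) u z)
    (hq : 1 < q) (hA : 0 < A) (hαL : α < L) (huα : u α = 0) (huL : u L = 0) (hz : 0 < z α) :
    ∃ β ∈ Ioc α L, u β = 0 ∧ ∀ t ∈ Ioo α β, 0 < u t :=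
  exists_first_zero hαL hs.continuousOn_fst (hs.hasDerivWithinAt_fst α (left_mem_Icc.2 hαL.le))
    (asymPow_pos (sub_pos.2 hq).ne' hA hz) huα huL

/-- The distance between the two zeros that bound an interval of positivity of a solution of
`HamiltonSys` with `A = a^(-q)` and `B = b^(-q)`; it does not depend on `ν`. -/
noncomputable def humpLength (p a b μ : ℝ) : ℝ := lam1 p a b 1 ^ (1 / p) * μ ^ (-(1 / p))

lemma humpLength_swap (p a b μ : ℝ) : humpLength p b a μ = humpLength p a b μ := by
  rw [humpLength, lam1_swap, humpLength]

lemma HamiltonSys.sub_eq_humpLength {β : ℝ}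
    (hs : HamiltonSys p q (a ^ (-q)) (b ^ (-q)) μ ν (Icc α β) u z) (h : p.HolderConjugate q)
    (ha : 0 < a) (hb : 0 < b) (hμ : 0 < μ) (hαβ : α < β) (huα : u α = 0) (huβ : u β = 0)
    (hu : ∀ t ∈ Ioo α β, 0 < u t) : β - α = humpLength p a b μ := by
  have hαβ' : 0 ≤ β - α := (sub_pos.2 hαβ).le
  rw [humpLength, hs.lam1_eq_rpow_mul h ha hb one_pos hαβ huα huβ hu, div_one,
    Real.mul_rpow (by positivity) hμ.le, ← Real.rpow_mul hαβ', mul_one_div_cancel h.ne_zero,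
    Real.rpow_one, mul_assoc, ← Real.rpow_add hμ, add_neg_cancel, Real.rpow_zero, mul_one]

lemma exists_pos_forall_lam1_eq (hp : 1 < p) (ha : 0 < a) (hb : 0 < b) :
    ∃ l > 0, ∀ L > 0, lam1 p a b L = (l / L) ^ p := by
  have h := Real.HolderConjugate.conjExponent hp
  obtain ⟨u, z, hs, hu0, hz0, hzeros⟩ := exists_hamiltonSys_univ h
    (Real.rpow_pos_of_pos ha (-p.conjExponent)) (Real.rpow_pos_of_pos hb (-p.conjExponent))
    one_pos one_pos
  obtain ⟨T, hT, huT⟩ := hzeros 0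
  obtain ⟨l, hl, hul, hpos⟩ := (hs.mono (subset_univ _)).exists_hump h.symm.lt
    (Real.rpow_pos_of_pos ha _) hT hu0 huT hz0
  refine ⟨l, hl.1, fun L hL => ?_⟩
  rw [(hs.mono (subset_univ _)).lam1_eq_rpow_mul h ha hb hL hl.1 hu0 hul hpos, sub_zero, mul_one]

lemma lam1_pos (hp : 1 < p) (ha : 0 < a) (hb : 0 < b) (hL : 0 < L) : 0 < lam1 p a b L := by
  obtain ⟨l, hl, hlam⟩ := exists_pos_forall_lam1_eq hp ha hb
  rw [hlam L hL]
  positivity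

lemma humpLength_pos (hp : 1 < p) (ha : 0 < a) (hb : 0 < b) (hμ : 0 < μ) :
    0 < humpLength p a b μ :=
  mul_pos (Real.rpow_pos_of_pos (lam1_pos hp ha hb one_pos) _) (Real.rpow_pos_of_pos hμ _)

lemma humpLength_eq_mul_lam1 (hp : 1 < p) (ha : 0 < a) (hb : 0 < b) (hL : 0 < L) (μ : ℝ) :
    humpLength p a b μ = L * lam1 p a b L ^ (1 / p) * μ ^ (-(1 / p)) := by
  obtain ⟨l, hl, hlam⟩ := exists_pos_forall_lam1_eq hp ha hb
  have hroot (x : ℝ) (hx : 0 < x) : (x ^ p) ^ (1 / p) = x := by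
    rw [← Real.rpow_mul hx.le, mul_one_div_cancel (by linarith), Real.rpow_one]
  rw [humpLength, hlam 1 one_pos, hlam L hL, hroot _ (by positivity), hroot _ (by positivity),
    div_one, mul_div_cancel₀ _ hL.ne']

lemma HamiltonSys.exists_next_zero
    (hs : HamiltonSys p q (a ^ (-q)) (b ^ (-q)) μ ν (Icc α L) u z) (h : p.HolderConjugate q)
    (ha : 0 < a) (hb : 0 < b) (hμ : 0 < μ) (hν : 0 < ν) (hαL : α < L) (huα : u α = 0)
    (huL : u L = 0) (hz : 0 < z α) :
    ∃ β ∈ Ioc α L, β = α + humpLength p a b μ ∧ u β = 0 ∧ z β < 0 := by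
  have hA : 0 < a ^ (-q) := Real.rpow_pos_of_pos ha _
  obtain ⟨β, hβ, huβ, hpos⟩ := hs.exists_hump h.symm.lt hA hαL huα huL hz
  have hs' := hs.mono (Icc_subset_Icc_right hβ.2)
  have hβ_mem : β ∈ Icc α β := right_mem_Icc.2 hβ.1.le
  have hz_nonpos : z β ≤ 0 := not_lt.1 fun hzβ =>
    (asymPow_pos h.symm.sub_one_ne_zero hA hzβ).not_ge
      (nonpos_of_hasDerivWithinAt_of_forall_pos hβ.1 (hs'.hasDerivWithinAt_fst β hβ_mem) hpos huβ)
  have hz_ne : z β ≠ 0 := fun hzβ => hz.ne' (hs'.eq_zero_of_eq_zero h hA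
    (Real.rpow_pos_of_pos hb _) hμ hν (convex_Icc α β) hβ_mem huβ hzβ (left_mem_Icc.2 hβ.1.le)).2
  exact ⟨β, hβ, eq_add_of_sub_eq' (hs'.sub_eq_humpLength h ha hb hμ hβ.1 huα huβ hpos), huβ,
    hz_nonpos.lt_of_ne hz_ne⟩

/-- `P` intervals of length `x` and `N` of length `y`, alternating and starting with one of length
`x`, add up to the length `T`. -/
def IsAlternatingCount (x y T : ℝ) (P N : ℕ) : Prop :=
  (P = N ∨ P = N + 1) ∧ P * x + N * y = T

lemma isAlternatingCount_succ_iff {x y T : ℝ} {P N : ℕ} :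
    IsAlternatingCount x y T (P + 1) N ↔ IsAlternatingCount y x (T - x) N P := by
  rw [IsAlternatingCount, IsAlternatingCount]
  push_cast
  refine and_congr (by omega) ⟨fun h => ?_, fun h => ?_⟩ <;> linarith

lemma isAlternatingCount_or_iff {x y T : ℝ} {P N : ℕ} :
    IsAlternatingCount x y T P N ∨ IsAlternatingCount y x T N P ↔
      |(P : ℝ) - N| ≤ 1 ∧ P * x + N * y = T := by
  rw [IsAlternatingCount, IsAlternatingCount, add_comm (N * y : ℝ), ← or_and_right,
    abs_sub_le_iff, sub_le_iff_le_add', sub_le_iff_le_add']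
  norm_cast
  refine and_congr_left fun _ => ?_
  omega

lemma HamiltonSys.exists_isAlternatingCount (h : p.HolderConjugate q) (ha : 0 < a) (hb : 0 < b)
    (hμ : 0 < μ) (hν : 0 < ν) {m : ℝ} (hmμ : m ≤ humpLength p a b μ)
    (hmν : m ≤ humpLength p a b ν) (n : ℕ) (hn : L - α ≤ n * m)
    (hs : HamiltonSys p q (a ^ (-q)) (b ^ (-q)) μ ν (Icc α L) u z) (hαL : α < L) (huα : u α = 0)
    (huL : u L = 0) (hz : 0 < z α) :
    ∃ P N : ℕ, IsAlternatingCount (humpLength p a b μ) (humpLength p a b ν) (L - α) P N := by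
  induction n generalizing a b μ ν α u z with
  | zero =>
    rw [Nat.cast_zero, zero_mul] at hn
    linarith
  | succ n ih =>
    obtain ⟨β, hβ, rfl, huβ, hzβ⟩ := hs.exists_next_zero h ha hb hμ hν hαL huα huL hz
    rcases hβ.2.eq_or_lt with hβL | hβL
    · exact ⟨1, 0, .inr rfl, by rw [← hβL]; simp⟩
    · push_cast at hn
      obtain ⟨P, N, hcount⟩ := ih hb ha hν hμ (by rwa [humpLength_swap]) (by rwa [humpLength_swap])
        (by linarith) (hs.mono (Icc_subset_Icc_left hβ.1.le)).neg hβL (by simp [huβ])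
        (by simp [huL]) (neg_pos.2 hzβ)
      rw [humpLength_swap p a b, humpLength_swap p a b, ← sub_sub] at hcount
      exact ⟨N + 1, P, isAlternatingCount_succ_iff.2 hcount⟩

lemma HamiltonSys.eq_zero_of_isAlternatingCount (h : p.HolderConjugate q) (ha : 0 < a) (hb : 0 < b)
    (hμ : 0 < μ) (hν : 0 < ν) {T : ℝ} {P N : ℕ}
    (hcount : IsAlternatingCount (humpLength p a b μ) (humpLength p a b ν) T P N)
    (hs : HamiltonSys p q (a ^ (-q)) (b ^ (-q)) μ ν univ u z) (hzeros : ∀ T, ∃ t > T, u t = 0)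
    (huα : u α = 0) (hz : 0 < z α) : u (α + T) = 0 := by
  induction hk : P + N generalizing a b μ ν α u z T P N with
  | zero =>
    obtain ⟨rfl, rfl⟩ := Nat.add_eq_zero_iff.1 hk
    simpa [← hcount.2] using huα
  | succ k ih =>
    obtain ⟨P, rfl⟩ : ∃ P', P = P' + 1 := Nat.exists_eq_succ_of_ne_zero (by grind [hcount.1])
    obtain ⟨L, hαL, huL⟩ := hzeros α
    obtain ⟨β, -, rfl, huβ, hzβ⟩ :=
      (hs.mono (subset_univ _)).exists_next_zero h ha hb hμ hν hαL huα huL hz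
    rw [isAlternatingCount_succ_iff, ← humpLength_swap p a b, ← humpLength_swap p a b] at hcount
    have hu := ih hb ha hν hμ hcount hs.neg (by simpa using hzeros) (by simpa using huβ)
      (neg_pos.2 hzβ) (by omega)
    rw [humpLength_swap p a b, neg_eq_zero] at hu
    convert hu using 2
    ring

lemma exists_hamiltonSys_pos_iff (h : p.HolderConjugate q) (ha : 0 < a) (hb : 0 < b) (hL : 0 < L)
    (hμ : 0 < μ) (hν : 0 < ν) :
    (∃ u z : ℝ → ℝ, HamiltonSys p q (a ^ (-q)) (b ^ (-q)) μ ν (Icc 0 L) u z ∧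
        u 0 = 0 ∧ u L = 0 ∧ 0 < z 0) ↔
      ∃ P N : ℕ, IsAlternatingCount (humpLength p a b μ) (humpLength p a b ν) L P N := by
  constructor
  · rintro ⟨u, z, hs, hu0, huL, hz⟩
    have hm : 0 < min (humpLength p a b μ) (humpLength p a b ν) :=
      lt_min (humpLength_pos h.lt ha hb hμ) (humpLength_pos h.lt ha hb hν)
    obtain ⟨n, hn⟩ := Archimedean.arch (L - 0) hm
    simpa using hs.exists_isAlternatingCount h ha hb hμ hν (min_le_left _ _)
      (min_le_right _ _) n (by simpa using hn) hL hu0 huL hz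
  · rintro ⟨P, N, hcount⟩
    obtain ⟨u, z, hs, hu0, hz0, hzeros⟩ := exists_hamiltonSys_univ h
      (Real.rpow_pos_of_pos ha (-q)) (Real.rpow_pos_of_pos hb (-q)) hμ hν
    have huL := hs.eq_zero_of_isAlternatingCount h ha hb hμ hν hcount hzeros hu0 hz0
    exact ⟨u, z, hs.mono (subset_univ _), hu0, by rwa [zero_add] at huL, hz0⟩

lemma exists_hamiltonSys_iff (h : p.HolderConjugate q) (ha : 0 < a) (hb : 0 < b) (hL : 0 < L)
    (hμ : 0 < μ) (hν : 0 < ν) :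
    (∃ u z : ℝ → ℝ, HamiltonSys p q (a ^ (-q)) (b ^ (-q)) μ ν (Icc 0 L) u z ∧
        u 0 = 0 ∧ u L = 0 ∧ z 0 ≠ 0) ↔
      ∃ P N : ℕ, |(P : ℝ) - N| ≤ 1 ∧ P * humpLength p a b μ + N * humpLength p a b ν = L := by
  have hpos := exists_hamiltonSys_pos_iff h ha hb hL hμ hν
  have hneg := exists_hamiltonSys_pos_iff h hb ha hL hν hμ
  rw [humpLength_swap p a b, humpLength_swap p a b] at hneg
  constructor
  · rintro ⟨u, z, hs, hu0, huL, hz⟩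
    rcases hz.lt_or_gt with hz | hz
    · obtain ⟨N, P, hcount⟩ := hneg.1 ⟨_, _, hs.neg, by simpa using hu0, by simpa using huL,
        neg_pos.2 hz⟩
      exact ⟨P, N, isAlternatingCount_or_iff.1 (.inr hcount)⟩
    · obtain ⟨P, N, hcount⟩ := hpos.1 ⟨u, z, hs, hu0, huL, hz⟩
      exact ⟨P, N, isAlternatingCount_or_iff.1 (.inl hcount)⟩
  · rintro ⟨P, N, hPN⟩
    rcases isAlternatingCount_or_iff.2 hPN with hcount | hcount
    · obtain ⟨u, z, hs, hu0, huL, hz⟩ := hpos.2 ⟨P, N, hcount⟩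
      exact ⟨u, z, hs, hu0, huL, hz.ne'⟩
    · obtain ⟨u, z, hs, hu0, huL, hz⟩ := hneg.2 ⟨N, P, hcount⟩
      exact ⟨_, _, hs.neg, by simpa using hu0, by simpa using huL, neg_ne_zero.2 hz.ne'⟩

lemma mul_humpLength_add_eq_iff (hp : 1 < p) (ha : 0 < a) (hb : 0 < b) (hL : 0 < L) (x y : ℝ) :
    x * humpLength p a b μ + y * humpLength p a b ν = L ↔
      x * μ ^ (-(1 / p)) + y * ν ^ (-(1 / p)) = lam1 p a b L ^ (-(1 / p)) := by
  have hlam := lam1_pos hp ha hb hL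
  rw [humpLength_eq_mul_lam1 hp ha hb hL, humpLength_eq_mul_lam1 hp ha hb hL,
    Real.rpow_neg hlam.le, ← one_div, eq_div_iff (by positivity)]
  refine ⟨fun hsum => mul_left_cancel₀ hL.ne' ?_, fun hsum => ?_⟩
  · linear_combination hsum
  · linear_combination L * hsum

end NodalIntervals

theorem stmt15 (p a b L μ ν : ℝ) (hp : 1 < p) (ha : 0 < a) (hb : 0 < b) (hL : 0 < L)
    (hμ : 0 < μ) (hν : 0 < ν) :
    (∃ u u' : ℝ → ℝ, IsWeakSol p a b L u u'
        (fun t => μ * (max (u t) 0) ^ (p - 1) - ν * (max (-u t) 0) ^ (p - 1)) ∧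
        ∃ t ∈ Set.Icc (0:ℝ) L, u t ≠ 0) ↔
      ∃ P N : ℕ, 1 ≤ P + N ∧ |(P : ℝ) - (N : ℝ)| ≤ 1 ∧
        (P : ℝ) * μ ^ (-(1 / p)) + (N : ℝ) * ν ^ (-(1 / p)) =
          (lam1 p a b L) ^ (-(1 / p)) := by
  have h := Real.HolderConjugate.conjExponent hp
  refine (exists_isWeakSol_iff_exists_hamiltonSys h ha hb hL hμ hν).trans
    ((exists_hamiltonSys_iff h ha hb hL hμ hν).trans (exists₂_congr fun P N => ?_))
  rw [mul_humpLength_add_eq_iff hp ha hb hL]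
  refine ⟨fun ⟨habs, hsum⟩ => ⟨?_, habs, hsum⟩, And.right⟩
  by_contra! hPN
  obtain ⟨rfl, rfl⟩ : P = 0 ∧ N = 0 := by omega
  simpa using hsum.trans_ne (Real.rpow_pos_of_pos (lam1_pos hp ha hb hL) _).ne'
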